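/- Let 0 ≤ L ≤ ∞ and n > 0. Let ν be a Borel probability measure on M_L and let (ν_i)_i be a sequence of Borel probability measures on M_L. Then ν_i → ν in the weak topology if and only if h_{ν_i} → h_ν for every L-layer MPNN model φ and every Lipschitz function ψ : ℝ^{d_L} → ℝⁿ. -/

import Mathlib

open MeasureTheory Set

noncomputable section

/-- Borel measures of total mass at most one on `X`. -/
abbrev SubProb (X : Type) [MeasurableSpace X] : Type :=
  {μ : Measure X // μ Set.univ ≤ 1}

/-- The weak topology on `SubProb X`: the coarsest topology making all maps
`μ ↦ ∫ f dμ` for bounded continuous `f` continuous. -/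
def subProbWeakTop (X : Type) [MeasurableSpace X] [TopologicalSpace X] :
    TopologicalSpace (SubProb X) :=
  ⨅ f : BoundedContinuousFunction X ℝ,
    TopologicalSpace.induced (fun μ => ∫ x, f x ∂μ.val) inferInstance

/-- Iterated degree measure spaces with their (weak) topologies:
`M 0` is a one-point space and `M (h+1)` is the space of Borel measures of total
mass at most one on `M h` with the weak topology. -/
def IDM : ℕ → Σ X : Type, TopologicalSpace X
  | 0 => ⟨Unit, inferInstance⟩
  | (h+1) =>
      let p := IDM h
      ⟨@SubProb p.1 (@borel p.1 p.2), @subProbWeakTop p.1 (@borel p.1 p.2) p.2⟩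

/-- The space of iterated degree measures of depth `h`. -/
def M (h : ℕ) : Type := (IDM h).1

instance (h : ℕ) : TopologicalSpace (M h) := (IDM h).2
instance (h : ℕ) : MeasurableSpace (M h) := borel (M h)
instance (h : ℕ) : BorelSpace (M h) := ⟨rfl⟩

def toSub {h : ℕ} (α : M (h+1)) : SubProb (M h) := α
def ofSub {h : ℕ} (μ : SubProb (M h)) : M (h+1) := μ
/-- The underlying measure of an iterated degree measure. -/
def toMeas {h : ℕ} (α : M (h+1)) : Measure (M h) := (toSub α).1

/-- Borel probability measures on `X`. -/
abbrev ProbM (X : Type) [MeasurableSpace X] : Type :=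
  {μ : Measure X // IsProbabilityMeasure μ}

/-- The weak topology on Borel probability measures. -/
def probWeakTop (X : Type) [MeasurableSpace X] [TopologicalSpace X] :
    TopologicalSpace (ProbM X) :=
  ⨅ f : BoundedContinuousFunction X ℝ,
    TopologicalSpace.induced (fun μ => ∫ x, f x ∂μ.val) inferInstance
/-- The projections `p_{h+1,h} : M (h+1) → M h`, given by pushforward. -/
def projM : (h : ℕ) → M (h+1) → M h
  | 0, _ => ()
  | (h+1), α => ofSub ⟨(toMeas α).map (projM h), by
      by_cases hf : AEMeasurable (projM h) (toMeas α)
      · rw [Measure.map_apply_of_aemeasurable hf MeasurableSet.univ, Set.preimage_univ]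
        exact (toSub α).2
      · rw [Measure.map_of_not_aemeasurable hf]
        simp⟩

/-- The inverse limit `M_∞` of the spaces `M h` along the projections,
with the subspace topology of the product topology. -/
abbrev Minf : Type := {α : (h : ℕ) → M h // ∀ h, projM h (α (h+1)) = α h}

instance : MeasurableSpace Minf := borel Minf
instance : BorelSpace Minf := ⟨rfl⟩
/-- An MPNN model: dimensions `d t`, an initial feature `φ₀ ∈ ℝ^{d 0}`, and
continuous update functions `φ t : ℝ^{d t} → ℝ^{d (t+1)}`. An `L`-layer model uses
the layers `φ 0, …, φ (L-1)`. -/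
structure MPNNModel where
  d : ℕ → ℕ
  φ₀ : EuclideanSpace ℝ (Fin (d 0))
  φ : (t : ℕ) → EuclideanSpace ℝ (Fin (d t)) → EuclideanSpace ℝ (Fin (d (t+1)))
  cont : ∀ t, Continuous (φ t)

/-- MPNN features on iterated degree measures: `h^{(0)}_α = φ₀` and
`h^{(t+1)}_α = φ_t (∫ h^{(t)}_β dα(β))`. -/
def idmFeat (m : MPNNModel) : (t : ℕ) → M t → EuclideanSpace ℝ (Fin (m.d t))
  | 0, _ => m.φ₀
  | (t+1), α => m.φ t (∫ β, idmFeat m t β ∂(toMeas α))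



/-- The set `{∫ h^{(t)}_β dα : α ∈ M (t+1)}` of attainable aggregated inputs of the
layer function `φ t`. -/
def aggSet (m : MPNNModel) (t : ℕ) : Set (EuclideanSpace ℝ (Fin (m.d t))) :=
  {z | ∃ α : M (t+1), z = ∫ β, idmFeat m t β ∂(toMeas α)}

/-- An `L`-layer MPNN model: each of the used layer functions is Lipschitz on its
compact set of attainable aggregated inputs. -/
def LipModel (m : MPNNModel) (L : ℕ) : Prop :=
  ∀ t, t < L → ∃ K : NNReal, LipschitzOnWith K (m.φ t) (aggSet m t)


/-- The set `N_t^1` of real-valued MPNN feature functions on `M t`. -/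
def NSet (t : ℕ) : Set (M t → ℝ) :=
  {f | ∃ m : MPNNModel, LipModel m t ∧ m.d t = 1 ∧
    f = fun α => ∑ i, idmFeat m t α i}

/-- The set `N_∞^1` of real-valued MPNN feature functions on `M = M_∞`. -/
def NSetInf : Set (Minf → ℝ) :=
  {f | ∃ (t : ℕ) (m : MPNNModel), LipModel m t ∧ m.d t = 1 ∧
    f = fun α => ∑ i, idmFeat m t (α.1 t) i}

instance (X : Type) [MeasurableSpace X] [TopologicalSpace X] :
    TopologicalSpace (ProbM X) := probWeakTop X

/-!
Call a real function on `M t` an MPNN function if it is a linear readout of the features of an MPNN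
with globally Lipschitz layers. Running two networks in parallel and appending a Lipschitz
combination of their outputs as a further coordinate shows that MPNN functions are stable under
Lipschitz combinations; in particular they form a lattice containing the constants. If they
separate the points of `M t`, they are therefore dense in `C(M t, ℝ)` by Stone–Weierstrass, so
their integrals determine a finite measure on `M t`; since integration is itself an MPNN layer,
the MPNN functions on `M (t + 1)` separate points as well. The same lattice argument applies to
`Minf`, where delaying a network by one layer brings two MPNN functions to a common depth.
Finally, integration against probability measures is equicontinuous on `C(X, ℝ)`, so weak
convergence may be tested on a dense set.
-/

open Filter Topology BoundedContinuousFunction TopologicalSpace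
open scoped NNReal

section IntegralOnCompact

variable {X : Type*} [TopologicalSpace X] [CompactSpace X] [MeasurableSpace X] [BorelSpace X]
  {V : Type*} [NormedAddCommGroup V]

lemma integrable_of_continuous_of_compactSpace {F : X → V} (hF : Continuous F) (μ : Measure X)
    [IsFiniteMeasure μ] : Integrable F μ :=
  hF.integrable_of_hasCompactSupport (HasCompactSupport.of_compactSpace F)

lemma lipschitzWith_integral {μ : Measure X} {C : ℝ≥0} (hμ : μ univ ≤ C) :
    LipschitzWith C fun f : C(X, ℝ) => ∫ x, f x ∂μ := by
  have : IsFiniteMeasure μ := ⟨hμ.trans_lt ENNReal.coe_lt_top⟩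
  have hmass : μ.real univ ≤ C := ENNReal.toReal_le_coe_of_le_coe hμ
  refine LipschitzWith.of_dist_le_mul fun f g => ?_
  rw [dist_eq_norm, dist_eq_norm,
    ← integral_sub (integrable_of_continuous_of_compactSpace f.continuous μ)
      (integrable_of_continuous_of_compactSpace g.continuous μ)]
  calc ‖∫ x, (f x - g x) ∂μ‖
      ≤ ‖f - g‖ * μ.real univ :=
        norm_integral_le_of_norm_le_const (.of_forall (f - g).norm_coe_le_norm)
    _ ≤ C * ‖f - g‖ := by rw [mul_comm]; gcongr

lemma measure_eq_of_dense_of_integral_eq [HasOuterApproxClosed X] {S : Set C(X, ℝ)} (hS : Dense S)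
    {μ ν : Measure X} [IsFiniteMeasure μ] [IsFiniteMeasure ν]
    (h : ∀ f ∈ S, ∫ x, f x ∂μ = ∫ x, f x ∂ν) : μ = ν := by
  have integral_continuous (ρ : Measure X) [IsFiniteMeasure ρ] :
      Continuous fun f : C(X, ℝ) => ∫ x, f x ∂ρ :=
    (lipschitzWith_integral (ENNReal.coe_toNNReal (measure_ne_top ρ univ)).ge).continuous
  have integral_eq : (fun f : C(X, ℝ) => ∫ x, f x ∂μ) = fun f => ∫ x, f x ∂ν :=
    (integral_continuous μ).ext_on hS (integral_continuous ν) h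
  exact ext_of_forall_integral_eq_of_IsFiniteMeasure fun f => congrFun integral_eq f.toContinuousMap

lemma tendsto_integral_of_dense {ι : Type*} {l : Filter ι} {μs : ι → Measure X} {μ : Measure X}
    {C : ℝ≥0} (hμs : ∀ i, μs i univ ≤ C) (hμ : μ univ ≤ C) {S : Set C(X, ℝ)} (hS : Dense S)
    (h : ∀ f ∈ S, Tendsto (fun i => ∫ x, f x ∂μs i) l (𝓝 (∫ x, f x ∂μ))) (f : C(X, ℝ)) :
    Tendsto (fun i => ∫ x, f x ∂μs i) l (𝓝 (∫ x, f x ∂μ)) := by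
  have equicontinuous : Equicontinuous fun i (f : C(X, ℝ)) => ∫ x, f x ∂μs i :=
    (LipschitzWith.uniformEquicontinuous _ C fun i => lipschitzWith_integral (hμs i)).equicontinuous
  have isClosed_convergent :=
    equicontinuous.isClosed_setOfPred_tendsto (l := l) (lipschitzWith_integral hμ).continuous
  exact closure_minimal h isClosed_convergent (hS f)

lemma tendsto_integral_of_forall_real [NormedSpace ℝ V] [FiniteDimensional ℝ V] {ι : Type*}
    {l : Filter ι} {μs : ι → Measure X} {μ : Measure X} [∀ i, IsFiniteMeasure (μs i)]
    [IsFiniteMeasure μ]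
    (h : ∀ f : C(X, ℝ), Tendsto (fun i => ∫ x, f x ∂μs i) l (𝓝 (∫ x, f x ∂μ)))
    {F : X → V} (hF : Continuous F) :
    Tendsto (fun i => ∫ x, F x ∂μs i) l (𝓝 (∫ x, F x ∂μ)) := by
  have : CompleteSpace V := FiniteDimensional.complete ℝ V
  let e := (Module.finBasis ℝ V).equivFunL
  rw [e.toHomeomorph.isInducing.tendsto_nhds_iff, tendsto_pi_nhds]
  intro j
  let coord : V →L[ℝ] ℝ := (ContinuousLinearMap.proj j).comp e.toContinuousLinearMap
  have coord_integral (ρ : Measure X) [IsFiniteMeasure ρ] :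
      coord (∫ x, F x ∂ρ) = ∫ x, coord (F x) ∂ρ :=
    (coord.integral_comp_comm (integrable_of_continuous_of_compactSpace hF ρ)).symm
  change Tendsto (fun i => coord (∫ x, F x ∂μs i)) l (𝓝 (coord (∫ x, F x ∂μ)))
  simp only [coord_integral]
  exact h ⟨fun x => coord (F x), coord.continuous.comp hF⟩

end IntegralOnCompact

lemma dense_of_forall_lipschitz_comp_mem {X : Type*} [TopologicalSpace X] [CompactSpace X]
    {S : Set C(X, ℝ)} (hS : S.Nonempty)
    (hcomp : ∀ f ∈ S, ∀ g ∈ S, ∀ (op : C(ℝ × ℝ, ℝ)) (K : ℝ≥0), LipschitzWith K op →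
      op.comp (f.prodMk g) ∈ S)
    (hsep : ∀ x y : X, x ≠ y → ∃ f ∈ S, f x ≠ f y) : Dense S := by
  have inf_mem : ∀ f ∈ S, ∀ g ∈ S, f ⊓ g ∈ S := fun f hf g hg =>
    hcomp f hf g hg ⟨fun p => min p.1 p.2, by fun_prop⟩ _
      (LipschitzWith.prod_fst.min LipschitzWith.prod_snd)
  have sup_mem : ∀ f ∈ S, ∀ g ∈ S, f ⊔ g ∈ S := fun f hf g hg =>
    hcomp f hf g hg ⟨fun p => max p.1 p.2, by fun_prop⟩ _
      (LipschitzWith.prod_fst.max LipschitzWith.prod_snd)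
  have affine_mem : ∀ f ∈ S, ∀ c b : ℝ, c • f + ContinuousMap.const X b ∈ S := fun f hf c b =>
    hcomp f hf f hf ⟨fun p => c * p.1 + b, by fun_prop⟩ _
      ((c • ContinuousLinearMap.fst ℝ ℝ ℝ).lipschitz.add (LipschitzWith.const b))
  have separatesPointsStrongly : S.SeparatesPointsStrongly := by
    intro v x y
    by_cases hxy : x = y
    · obtain ⟨f, hf⟩ := hS
      exact ⟨_, affine_mem f hf 0 (v x), by simp, by simp [hxy]⟩
    · obtain ⟨f, hf, hne⟩ := hsep x y hxy
      have hne' : f y - f x ≠ 0 := sub_ne_zero.2 hne.symm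
      let slope := (v y - v x) / (f y - f x)
      refine ⟨_, affine_mem f hf slope (v x - slope * f x), by simp, ?_⟩
      simp only [slope, ContinuousMap.add_apply, ContinuousMap.smul_apply,
        ContinuousMap.const_apply, smul_eq_mul]
      field_simp
      ring
  exact dense_iff_closure_eq.2
    (ContinuousMap.sublattice_closure_eq_top S hS inf_mem sup_mem separatesPointsStrongly)

section WeakTopology

variable {X : Type} [MeasurableSpace X] [TopologicalSpace X]

instance : TopologicalSpace (SubProb X) := subProbWeakTop X

instance (μ : SubProb X) : IsFiniteMeasure μ.1 := ⟨μ.2.trans_lt ENNReal.one_lt_top⟩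

instance (ν : ProbM X) : IsProbabilityMeasure ν.1 := ν.2

lemma continuous_subProb_iff {Y : Type*} [TopologicalSpace Y] {g : Y → SubProb X} :
    Continuous g ↔ ∀ f : X →ᵇ ℝ, Continuous fun y => ∫ x, f x ∂(g y).1 :=
  continuous_iInf_rng.trans (forall_congr' fun _ => continuous_induced_rng)

lemma tendsto_probM_iff {ι : Type*} {l : Filter ι} {ν : ProbM X} {νs : ι → ProbM X} :
    Tendsto νs l (𝓝 ν) ↔
      ∀ f : X →ᵇ ℝ, Tendsto (fun i => ∫ x, f x ∂(νs i).1) l (𝓝 (∫ x, f x ∂ν.1)) := by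
  have nhds_eq : 𝓝 ν =
      ⨅ f : X →ᵇ ℝ, comap (fun μ : ProbM X => ∫ x, f x ∂μ.1) (𝓝 (∫ x, f x ∂ν.1)) :=
    nhds_iInf.trans (iInf_congr fun _ => nhds_induced _ _)
  simp only [nhds_eq, tendsto_iInf, tendsto_comap_iff, Function.comp_def]

variable [CompactSpace X] [BorelSpace X] {V : Type*} [NormedAddCommGroup V] [NormedSpace ℝ V]
  [FiniteDimensional ℝ V]

lemma continuous_integral_subProb {F : X → V} (hF : Continuous F) :
    Continuous fun μ : SubProb X => ∫ x, F x ∂μ.1 :=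
  continuous_iff_continuousAt.2 fun μ => tendsto_integral_of_forall_real
    (fun f => (continuous_subProb_iff.1 continuous_id (mkOfCompact f)).tendsto μ) hF

lemma tendsto_integral_probM {ι : Type*} {l : Filter ι} {ν : ProbM X} {νs : ι → ProbM X}
    (h : Tendsto νs l (𝓝 ν)) {F : X → V} (hF : Continuous F) :
    Tendsto (fun i => ∫ x, F x ∂(νs i).1) l (𝓝 (∫ x, F x ∂ν.1)) :=
  tendsto_integral_of_forall_real (fun f => tendsto_probM_iff.1 h (mkOfCompact f)) hF

lemma tendsto_probM_of_dense {ι : Type*} {l : Filter ι} {ν : ProbM X} {νs : ι → ProbM X}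
    {S : Set C(X, ℝ)} (hS : Dense S)
    (h : ∀ f ∈ S, Tendsto (fun i => ∫ x, f x ∂(νs i).1) l (𝓝 (∫ x, f x ∂ν.1))) :
    Tendsto νs l (𝓝 ν) :=
  tendsto_probM_iff.2 fun f => tendsto_integral_of_dense (C := 1)
    (fun i => by simp) (by simp) hS h f.toContinuousMap

instance [T2Space X] : CompactSpace (SubProb X) := by
  have : CompactSpace {μ : FiniteMeasure X | μ.mass ≤ 1} :=
    isCompact_iff_compactSpace.1 (isCompact_setOfPred_finiteMeasure_le_of_compactSpace X 1)
  have mass_le_one_iff (μ : FiniteMeasure X) : μ.mass ≤ 1 ↔ (μ : Measure X) univ ≤ 1 := by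
    rw [← FiniteMeasure.ennreal_mass, ENNReal.coe_le_one_iff]
  let toSubProb : {μ : FiniteMeasure X | μ.mass ≤ 1} → SubProb X :=
    fun μ => ⟨μ.1, (mass_le_one_iff μ.1).1 μ.2⟩
  have continuous_toSubProb : Continuous toSubProb := continuous_subProb_iff.2 fun f =>
    (FiniteMeasure.continuous_integral_boundedContinuousFunction f).comp continuous_subtype_val
  have surjective_toSubProb : Function.Surjective toSubProb := fun μ =>
    ⟨⟨⟨μ.1, inferInstance⟩, (mass_le_one_iff _).2 μ.2⟩, rfl⟩
  exact surjective_toSubProb.compactSpace continuous_toSubProb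

instance [MetrizableSpace X] : MetrizableSpace (SubProb X) := by
  let _ : MetricSpace X := metrizableSpaceMetric X
  let moments : SubProb X → ℕ → ℝ := fun μ n => ∫ x, denseSeq C(X, ℝ) n x ∂μ.1
  have continuous_moments : Continuous moments :=
    continuous_pi fun n => continuous_integral_subProb (denseSeq C(X, ℝ) n).continuous
  have injective_moments : Function.Injective moments := fun μ ν h =>
    Subtype.ext <| measure_eq_of_dense_of_integral_eq (denseRange_denseSeq C(X, ℝ)) <|
      forall_mem_range.2 fun n => congrFun h n
  exact (continuous_moments.isClosedEmbedding injective_moments).isEmbedding.metrizableSpace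

lemma tendsto_probM_iff_forall_lipschitz_readout {κ : Type*} {V : κ → Type*}
    [∀ k, NormedAddCommGroup (V k)] [∀ k, NormedSpace ℝ (V k)] [∀ k, FiniteDimensional ℝ (V k)]
    {F : ∀ k, X → V k} (hF : ∀ k, Continuous (F k))
    (hdense : Dense {f : C(X, ℝ) | ∃ k, ∃ ℓ : V k →L[ℝ] ℝ, ∀ x, f x = ℓ (F k x)})
    (E : Type*) [NormedAddCommGroup E] [NormedSpace ℝ E] [Nontrivial E]
    {ι : Type*} {l : Filter ι} {ν : ProbM X} {νs : ι → ProbM X} :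
    Tendsto νs l (𝓝 ν) ↔
      ∀ (k : κ) (ψ : V k → E) (K : ℝ≥0), LipschitzWith K ψ →
        Tendsto (fun i => ψ (∫ x, F k x ∂(νs i).1)) l (𝓝 (ψ (∫ x, F k x ∂ν.1))) := by
  refine ⟨fun h k ψ K hψ => (hψ.continuous.tendsto _).comp (tendsto_integral_probM h (hF k)),
    fun h => tendsto_probM_of_dense hdense ?_⟩
  rintro f ⟨k, ℓ, hf⟩
  have : CompleteSpace (V k) := FiniteDimensional.complete ℝ (V k)
  obtain ⟨e, he⟩ := exists_ne (0 : E)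
  obtain ⟨u, hu⟩ := SeparatingDual.exists_eq_one (R := ℝ) he
  have integral_eq (ρ : ProbM X) : ∫ x, f x ∂ρ.1 = u (ℓ.smulRight e (∫ x, F k x ∂ρ.1)) := by
    simp only [hf, ContinuousLinearMap.smulRight_apply, map_smul, hu, smul_eq_mul, mul_one]
    exact ℓ.integral_comp_comm (integrable_of_continuous_of_compactSpace (hF k) ρ.1)
  simp only [integral_eq]
  exact (u.continuous.tendsto _).comp (h k _ _ (ℓ.smulRight e).lipschitz)

end WeakTopology

section IteratedDegreeMeasures

lemma compactSpace_and_metrizableSpace_M (t : ℕ) : CompactSpace (M t) ∧ MetrizableSpace (M t) := by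
  induction t with
  | zero => exact ⟨inferInstanceAs (CompactSpace Unit), inferInstanceAs (MetrizableSpace Unit)⟩
  | succ t ih =>
    obtain ⟨_, _⟩ := ih
    exact ⟨inferInstanceAs (CompactSpace (SubProb (M t))),
      inferInstanceAs (MetrizableSpace (SubProb (M t)))⟩

instance (t : ℕ) : CompactSpace (M t) := (compactSpace_and_metrizableSpace_M t).1

instance (t : ℕ) : MetrizableSpace (M t) := (compactSpace_and_metrizableSpace_M t).2

instance {t : ℕ} (α : M (t + 1)) : IsFiniteMeasure (toMeas α) :=
  inferInstanceAs (IsFiniteMeasure (toSub α).1)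

lemma toMeas_injective (t : ℕ) : Function.Injective (toMeas : M (t + 1) → Measure (M t)) :=
  fun _ _ h => Subtype.ext (p := fun μ : Measure (M t) => μ univ ≤ 1) h

lemma continuous_integral_toMeas {V : Type*} [NormedAddCommGroup V] [NormedSpace ℝ V]
    [FiniteDimensional ℝ V] {t : ℕ} {F : M t → V} (hF : Continuous F) :
    Continuous fun α : M (t + 1) => ∫ β, F β ∂toMeas α :=
  continuous_integral_subProb (X := M t) hF

lemma continuous_projM (t : ℕ) : Continuous (projM t) := by
  induction t with
  | zero => exact continuous_const (y := ())
  | succ t ih =>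
    refine continuous_subProb_iff (X := M t) (g := projM (t + 1)).2 fun f => ?_
    refine (continuous_integral_toMeas (f.continuous.comp ih)).congr fun α => ?_
    exact (integral_map ih.aemeasurable f.continuous.aestronglyMeasurable).symm

lemma integral_toMeas_projM {V : Type*} [NormedAddCommGroup V] [NormedSpace ℝ V] {t : ℕ}
    {F : M t → V} (hF : Continuous F) (α : M (t + 2)) :
    ∫ β, F β ∂toMeas (projM (t + 1) α) = ∫ β, F (projM t β) ∂toMeas α :=
  integral_map (continuous_projM t).aemeasurable
    (hF.stronglyMeasurable_of_hasCompactSupport (.of_compactSpace F)).aestronglyMeasurable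

lemma continuous_Minf_eval (t : ℕ) : Continuous fun a : Minf => a.1 t :=
  (continuous_apply t).comp continuous_subtype_val

lemma integral_map_Minf_eval {V : Type*} [NormedAddCommGroup V] [NormedSpace ℝ V] {t : ℕ}
    {F : M t → V} (hF : Continuous F) (ν : Measure Minf) :
    ∫ β, F β ∂(ν.map fun a => a.1 t) = ∫ a, F (a.1 t) ∂ν :=
  integral_map (continuous_Minf_eval t).aemeasurable
    (hF.stronglyMeasurable_of_hasCompactSupport (.of_compactSpace F)).aestronglyMeasurable

instance : CompactSpace Minf := by
  have isClosed_compatible : IsClosed {α : (t : ℕ) → M t | ∀ t, projM t (α (t + 1)) = α t} := by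
    simp only [Set.ofPred_forall]
    exact isClosed_iInter fun t =>
      isClosed_eq ((continuous_projM t).comp (continuous_apply (t + 1))) (continuous_apply t)
  exact isCompact_iff_compactSpace.1 isClosed_compatible.isCompact

lemma continuous_idmFeat (m : MPNNModel) (t : ℕ) : Continuous (idmFeat m t) := by
  induction t with
  | zero => exact continuous_const
  | succ t ih => exact (m.cont t).comp (continuous_integral_toMeas ih)

end IteratedDegreeMeasures

/-- A message passing network all of whose layers act on one and the same normed space `V` and are
globally Lipschitz. Fixing `V` makes it possible to modify single layers without casts between
feature dimensions, and leaving it abstract lets networks run in parallel on product spaces. -/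
structure LipNet (V : Type*) [NormedAddCommGroup V] where
  initial : V
  layer : ℕ → V → V
  lipschitz : ∀ s, ∃ K : ℝ≥0, LipschitzWith K (layer s)

namespace LipNet

variable {V W : Type*} [NormedAddCommGroup V] [NormedAddCommGroup W]

/-- The feature that the network computes in its `t`-th layer, the analogue of `idmFeat`. -/
def feat [NormedSpace ℝ V] (N : LipNet V) : (t : ℕ) → M t → V
  | 0, _ => N.initial
  | t + 1, α => N.layer t (∫ β, N.feat t β ∂toMeas α)

/-- The constant network: every feature equals `v`. -/
def const (v : V) : LipNet V where
  initial := v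
  layer _ _ := v
  lipschitz _ := ⟨0, .const v⟩

/-- Two networks running in parallel. -/
def prod (N : LipNet V) (N' : LipNet W) : LipNet (V × W) where
  initial := (N.initial, N'.initial)
  layer s p := (N.layer s p.1, N'.layer s p.2)
  lipschitz s :=
    let ⟨_, hK⟩ := N.lipschitz s
    let ⟨_, hK'⟩ := N'.lipschitz s
    ⟨_, (hK.comp .prod_fst).prodMk (hK'.comp .prod_snd)⟩

/-- The network that carries the value of `g` at the current feature as a further coordinate. -/
def graph (N : LipNet V) (g : V → W) {K : ℝ≥0} (hg : LipschitzWith K g) : LipNet (V × W) where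
  initial := (N.initial, g N.initial)
  layer s p := (N.layer s p.1, g (N.layer s p.1))
  lipschitz s :=
    let ⟨_, hN⟩ := N.lipschitz s
    ⟨_, (hN.comp .prod_fst).prodMk (hg.comp (hN.comp .prod_fst))⟩

/-- The network whose layer `t` returns its aggregated input unchanged. -/
def skipLayer (N : LipNet V) (t : ℕ) : LipNet V where
  initial := N.initial
  layer := Function.update N.layer t id
  lipschitz s := by
    rcases eq_or_ne s t with rfl | hs
    · exact ⟨1, by simpa using LipschitzWith.id⟩
    · simpa only [Function.update_of_ne hs] using N.lipschitz s

/-- The network delayed by one layer: its features at depth `t + 1` are those of `N` at depth `t`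
of the projected measure. -/
def delay (N : LipNet V) : LipNet V where
  initial := N.initial
  layer
    | 0, _ => N.initial
    | s + 1, v => N.layer s v
  lipschitz
    | 0 => ⟨0, .const N.initial⟩
    | s + 1 => N.lipschitz s

/-- The network in Euclidean coordinates. -/
def toModel [NormedSpace ℝ V] [FiniteDimensional ℝ V] (N : LipNet V) : MPNNModel where
  d _ := Module.finrank ℝ V
  φ₀ := toEuclidean N.initial
  φ s x := toEuclidean (N.layer s (toEuclidean.symm x))
  cont s :=
    let ⟨_, hK⟩ := N.lipschitz s
    toEuclidean.continuous.comp (hK.continuous.comp toEuclidean.symm.continuous)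

variable [NormedSpace ℝ V] [NormedSpace ℝ W]

lemma feat_const (v : V) (t : ℕ) (α : M t) : (const v).feat t α = v := by
  cases t <;> rfl

lemma feat_skipLayer_of_le (N : LipNet V) {s t : ℕ} (hst : s ≤ t) (α : M s) :
    (N.skipLayer t).feat s α = N.feat s α := by
  induction s with
  | zero => rfl
  | succ s ih =>
    rw [feat, feat, funext (ih (Nat.le_of_succ_le hst))]
    exact congrFun (Function.update_of_ne (Nat.ne_of_lt hst) id N.layer) _

lemma feat_skipLayer_succ (N : LipNet V) (t : ℕ) (α : M (t + 1)) :
    (N.skipLayer t).feat (t + 1) α = ∫ β, N.feat t β ∂toMeas α := by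
  rw [feat, funext (N.feat_skipLayer_of_le le_rfl)]
  exact congrFun (Function.update_self t id N.layer) _

variable [FiniteDimensional ℝ V] [FiniteDimensional ℝ W]

lemma continuous_feat (N : LipNet V) (t : ℕ) : Continuous (N.feat t) := by
  induction t with
  | zero => exact continuous_const
  | succ t ih =>
    obtain ⟨K, hK⟩ := N.lipschitz t
    exact hK.continuous.comp (continuous_integral_toMeas ih)

lemma feat_prod (N : LipNet V) (N' : LipNet W) (t : ℕ) (α : M t) :
    (N.prod N').feat t α = (N.feat t α, N'.feat t α) := by
  have : CompleteSpace V := FiniteDimensional.complete ℝ V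
  have : CompleteSpace W := FiniteDimensional.complete ℝ W
  induction t with
  | zero => rfl
  | succ t ih =>
    rw [feat, funext ih, integral_pair
      (integrable_of_continuous_of_compactSpace (N.continuous_feat t) _)
      (integrable_of_continuous_of_compactSpace (N'.continuous_feat t) _)]
    rfl

lemma feat_graph (N : LipNet V) (g : V → W) {K : ℝ≥0} (hg : LipschitzWith K g) (t : ℕ) (α : M t) :
    (N.graph g hg).feat t α = (N.feat t α, g (N.feat t α)) := by
  have : CompleteSpace V := FiniteDimensional.complete ℝ V
  have : CompleteSpace W := FiniteDimensional.complete ℝ W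
  induction t with
  | zero => rfl
  | succ t ih =>
    have continuous_comp : Continuous fun β => g (N.feat t β) :=
      hg.continuous.comp (N.continuous_feat t)
    rw [feat, funext ih, integral_pair
      (integrable_of_continuous_of_compactSpace (N.continuous_feat t) _)
      (integrable_of_continuous_of_compactSpace continuous_comp _)]
    rfl

lemma feat_delay_succ (N : LipNet V) (t : ℕ) (α : M (t + 1)) :
    N.delay.feat (t + 1) α = N.feat t (projM t α) := by
  induction t with
  | zero => rfl
  | succ t ih =>
    rw [feat, feat, funext ih, integral_toMeas_projM (N.continuous_feat t)]
    rfl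

lemma lipModel_toModel (N : LipNet V) (t : ℕ) : LipModel N.toModel t := fun s _ =>
  let ⟨_, hK⟩ := N.lipschitz s
  ⟨_, ((toEuclidean (E := V)).lipschitz.comp
    (hK.comp (toEuclidean (E := V)).symm.lipschitz)).lipschitzOnWith⟩

lemma idmFeat_toModel (N : LipNet V) (t : ℕ) (α : M t) :
    idmFeat N.toModel t α = toEuclidean (N.feat t α) := by
  induction t with
  | zero => rfl
  | succ t ih =>
    change toEuclidean (N.layer t (toEuclidean.symm (∫ β, idmFeat N.toModel t β ∂toMeas α))) = _
    rw [funext ih, toEuclidean.integral_comp_comm, toEuclidean.symm_apply_apply, feat]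

end LipNet

/-- `F` is a linear readout of the depth-`t` features of a Lipschitz network on some
finite-dimensional space. Linearity is what lets the readout commute with integration. -/
def IsMPNNFunction {W : Type*} [NormedAddCommGroup W] [NormedSpace ℝ W] (t : ℕ) (F : M t → W) :
    Prop :=
  ∃ (V : Type) (_ : NormedAddCommGroup V) (_ : NormedSpace ℝ V) (_ : FiniteDimensional ℝ V)
    (N : LipNet V) (ℓ : V →L[ℝ] W), ∀ α, F α = ℓ (N.feat t α)

namespace IsMPNNFunction

variable {W W' : Type} [NormedAddCommGroup W] [NormedSpace ℝ W]
  [NormedAddCommGroup W'] [NormedSpace ℝ W'] {t : ℕ} {F : M t → W} {G : M t → W'}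

lemma const [FiniteDimensional ℝ W] (t : ℕ) (w : W) : IsMPNNFunction t fun _ => w :=
  ⟨W, _, _, inferInstance, .const w, .id ℝ W, fun α => (LipNet.feat_const w t α).symm⟩

lemma continuous (hF : IsMPNNFunction t F) : Continuous F := by
  obtain ⟨V, _, _, _, N, ℓ, hF⟩ := hF
  exact (ℓ.continuous.comp (N.continuous_feat t)).congr fun α => (hF α).symm

lemma prodMk (hF : IsMPNNFunction t F) (hG : IsMPNNFunction t G) :
    IsMPNNFunction t fun α => (F α, G α) := by
  obtain ⟨V, _, _, _, N, ℓ, hF⟩ := hF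
  obtain ⟨V', _, _, _, N', ℓ', hG⟩ := hG
  exact ⟨V × V', _, _, inferInstance, N.prod N', ℓ.prodMap ℓ', fun α => by
    simp [LipNet.feat_prod, hF, hG]⟩

lemma lipschitz_comp [FiniteDimensional ℝ W'] (hF : IsMPNNFunction t F) {g : W → W'} {K : ℝ≥0}
    (hg : LipschitzWith K g) : IsMPNNFunction t fun α => g (F α) := by
  obtain ⟨V, _, _, _, N, ℓ, hF⟩ := hF
  exact ⟨V × W', _, _, inferInstance, N.graph (g ∘ ℓ) (hg.comp ℓ.lipschitz), .snd ℝ V W',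
    fun α => by simp [LipNet.feat_graph, hF]⟩

lemma integral [CompleteSpace W] (hF : IsMPNNFunction t F) :
    IsMPNNFunction (t + 1) fun α => ∫ β, F β ∂toMeas α := by
  obtain ⟨V, _, _, _, N, ℓ, hF⟩ := hF
  have : CompleteSpace V := FiniteDimensional.complete ℝ V
  refine ⟨V, _, _, inferInstance, N.skipLayer t, ℓ, fun α => ?_⟩
  simp only [hF, LipNet.feat_skipLayer_succ]
  exact ℓ.integral_comp_comm (integrable_of_continuous_of_compactSpace (N.continuous_feat t) _)

lemma comp_projM (hF : IsMPNNFunction t F) : IsMPNNFunction (t + 1) fun α => F (projM t α) := by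
  obtain ⟨V, _, _, _, N, ℓ, hF⟩ := hF
  exact ⟨V, _, _, inferInstance, N.delay, ℓ, fun α => by
    rw [N.feat_delay_succ, ← hF]⟩

lemma exists_of_le (hF : IsMPNNFunction t F) {s : ℕ} (hts : t ≤ s) :
    ∃ F' : M s → W, IsMPNNFunction s F' ∧ ∀ a : Minf, F' (a.1 s) = F (a.1 t) := by
  induction s, hts using Nat.le_induction with
  | base => exact ⟨F, hF, fun _ => rfl⟩
  | succ s _ ih =>
    obtain ⟨F', hF', hFF'⟩ := ih
    exact ⟨_, hF'.comp_projM, fun a => by rw [a.2 s, hFF']⟩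

lemma exists_model (hF : IsMPNNFunction t F) :
    ∃ m : MPNNModel, LipModel m t ∧
      ∃ ℓ : EuclideanSpace ℝ (Fin (m.d t)) →L[ℝ] W, ∀ α, F α = ℓ (idmFeat m t α) := by
  obtain ⟨V, _, _, _, N, ℓ, hF⟩ := hF
  refine ⟨N.toModel, N.lipModel_toModel t,
    ℓ.comp (toEuclidean (E := V)).symm.toContinuousLinearMap, fun α => ?_⟩
  rw [N.idmFeat_toModel, hF]
  exact congrArg ℓ (toEuclidean.symm_apply_apply _).symm

end IsMPNNFunction

lemma dense_isMPNNFunction_of_separatesPoints {t : ℕ}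
    (hsep : ∀ α β : M t, α ≠ β → ∃ f : M t → ℝ, IsMPNNFunction t f ∧ f α ≠ f β) :
    Dense {f : C(M t, ℝ) | IsMPNNFunction t f} := by
  refine dense_of_forall_lipschitz_comp_mem ⟨.const _ 0, IsMPNNFunction.const t 0⟩
    (fun f hf g hg op K hop => (IsMPNNFunction.prodMk hf hg).lipschitz_comp hop)
    fun α β hαβ => ?_
  obtain ⟨f, hf, hne⟩ := hsep α β hαβ
  exact ⟨⟨f, hf.continuous⟩, hf, hne⟩

lemma exists_isMPNNFunction_ne {t : ℕ} {α β : M t} (hαβ : α ≠ β) :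
    ∃ f : M t → ℝ, IsMPNNFunction t f ∧ f α ≠ f β := by
  induction t with
  | zero => exact absurd (Subsingleton.elim (α := Unit) α β) hαβ
  | succ t ih =>
    by_contra! h
    exact hαβ <| toMeas_injective t <| measure_eq_of_dense_of_integral_eq
      (dense_isMPNNFunction_of_separatesPoints fun _ _ => ih) fun f hf => h _ hf.integral

lemma dense_linear_readouts_idmFeat (L : ℕ) :
    Dense {f : C(M L, ℝ) | ∃ m : {m : MPNNModel // LipModel m L},
      ∃ ℓ : EuclideanSpace ℝ (Fin (m.1.d L)) →L[ℝ] ℝ, ∀ α, f α = ℓ (idmFeat m.1 L α)} := by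
  refine (dense_isMPNNFunction_of_separatesPoints fun _ _ => exists_isMPNNFunction_ne).mono
    fun f hf => ?_
  obtain ⟨m, hm, ℓ, hℓ⟩ := hf.exists_model
  exact ⟨⟨m, hm⟩, ℓ, hℓ⟩

lemma dense_isMPNNFunction_Minf :
    Dense {f : C(Minf, ℝ) | ∃ t, ∃ g : M t → ℝ, IsMPNNFunction t g ∧ ∀ a, f a = g (a.1 t)} := by
  refine dense_of_forall_lipschitz_comp_mem
    ⟨.const _ 0, 0, _, IsMPNNFunction.const 0 0, fun _ => rfl⟩ ?_ fun a b hab => ?_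
  · rintro f ⟨t, f', hf', hf⟩ g ⟨s, g', hg', hg⟩ op K hop
    obtain ⟨f'', hf'', hff⟩ := hf'.exists_of_le (le_max_left t s)
    obtain ⟨g'', hg'', hgg⟩ := hg'.exists_of_le (le_max_right t s)
    exact ⟨max t s, _, (hf''.prodMk hg'').lipschitz_comp hop, fun a => by simp [hf, hg, hff, hgg]⟩
  · obtain ⟨t, ht⟩ := Function.ne_iff.1 (Subtype.coe_injective.ne hab)
    obtain ⟨f, hf, hne⟩ := exists_isMPNNFunction_ne ht
    exact ⟨⟨_, hf.continuous.comp (continuous_Minf_eval t)⟩, ⟨t, f, hf, fun _ => rfl⟩, hne⟩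

lemma dense_linear_readouts_idmFeat_Minf :
    Dense {f : C(Minf, ℝ) | ∃ k : Σ L, {m : MPNNModel // LipModel m L},
      ∃ ℓ : EuclideanSpace ℝ (Fin (k.2.1.d k.1)) →L[ℝ] ℝ,
        ∀ a, f a = ℓ (idmFeat k.2.1 k.1 (a.1 k.1))} := by
  refine dense_isMPNNFunction_Minf.mono fun f hf => ?_
  obtain ⟨L, g, hg, hfg⟩ := hf
  obtain ⟨m, hm, ℓ, hℓ⟩ := hg.exists_model
  exact ⟨⟨L, m, hm⟩, ℓ, fun a => (hfg a).trans (hℓ _)⟩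

/-- Weak convergence of probability measures on `M L` (for `0 ≤ L ≤ ∞`) is
equivalent to convergence of the outputs of all `L`-layer MPNN models followed by a
Lipschitz readout `ψ : ℝ^{d_L} → ℝⁿ`. -/
theorem weak_convergence_iff_mpnn_convergence (n : ℕ) (hn : 0 < n) :
    (∀ L : ℕ, ∀ ν : ProbM (M L), ∀ νs : ℕ → ProbM (M L),
      Filter.Tendsto νs Filter.atTop (nhds ν) ↔
        ∀ (m : MPNNModel), LipModel m L →
          ∀ (ψ : EuclideanSpace ℝ (Fin (m.d L)) → EuclideanSpace ℝ (Fin n))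
            (K : NNReal), LipschitzWith K ψ →
            Filter.Tendsto (fun i => ψ (∫ β, idmFeat m L β ∂(νs i).1))
              Filter.atTop (nhds (ψ (∫ β, idmFeat m L β ∂ν.1)))) ∧
    (∀ ν : ProbM Minf, ∀ νs : ℕ → ProbM Minf,
      Filter.Tendsto νs Filter.atTop (nhds ν) ↔
        ∀ (L : ℕ) (m : MPNNModel), LipModel m L →
          ∀ (ψ : EuclideanSpace ℝ (Fin (m.d L)) → EuclideanSpace ℝ (Fin n))
            (K : NNReal), LipschitzWith K ψ →
            Filter.Tendsto
              (fun i => ψ (∫ β, idmFeat m L β ∂((νs i).1.map fun a => a.1 L)))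
              Filter.atTop
              (nhds (ψ (∫ β, idmFeat m L β ∂(ν.1.map fun a => a.1 L))))) := by
  have : Nonempty (Fin n) := ⟨⟨0, hn⟩⟩
  refine ⟨fun L ν νs => ?_, fun ν νs => ?_⟩
  · exact (tendsto_probM_iff_forall_lipschitz_readout (fun m => continuous_idmFeat m.1 L)
      (dense_linear_readouts_idmFeat L) (EuclideanSpace ℝ (Fin n))).trans Subtype.forall
  · simp only [integral_map_Minf_eval (continuous_idmFeat _ _)]
    exact (tendsto_probM_iff_forall_lipschitz_readout
      (fun k => (continuous_idmFeat k.2.1 k.1).comp (continuous_Minf_eval k.1))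
      dense_linear_readouts_idmFeat_Minf (EuclideanSpace ℝ (Fin n))).trans
        (Sigma.forall.trans (forall_congr' fun _ => Subtype.forall))

end
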